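/- Let C be a commutative entropy space, λ : C → C a morphism, and α, β ∈ C. Then h(λ, α∧β) ≤ h(λ, α) + h(λ, β). -/

import Mathlib

open Filter ENNReal Topology

/-- An *entropy space*: a pre-ordered semigroup `(C, ≺, ∧)` satisfying (C1) and (C2),
together with an entropy function `h : C → [0,∞]` satisfying (H1) and (H2). -/
structure EntropySpace (C : Type*) where
  prec : C → C → Prop
  meet : C → C → C
  h : C → ℝ≥0∞
  prec_refl : ∀ a, prec a a
  prec_trans : ∀ a b c, prec a b → prec b c → prec a c
  meet_assoc : ∀ a b c, meet (meet a b) c = meet a (meet b c)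
  c1_left : ∀ a b, prec (meet a b) a
  c1_right : ∀ a b, prec (meet a b) b
  c2 : ∀ a a' b b', prec a a' → prec b b' → prec (meet a b) (meet a' b')
  h1 : ∀ a b, prec a b → h b ≤ h a
  h2 : ∀ a b, h (meet a b) ≤ h a + h b

variable {C : Type*}

/-- `α_0^n[λ] = α ∧ λα ∧ ⋯ ∧ λ^n α` (a product of `n + 1` factors). -/
def EntropySpace.orbitProd (E : EntropySpace C) (l : C → C) (a : C) : ℕ → C
  | 0 => a
  | n + 1 => E.meet (E.orbitProd l a n) (l^[n + 1] a)

/-- `h(λ, α) = limsup_{n → ∞} (1/n) · h(α_0^{n-1}[λ])`, computed in `[0,∞]`. -/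
noncomputable def EntropySpace.relEntropy (E : EntropySpace C) (l : C → C) (a : C) : ℝ≥0∞ :=
  Filter.atTop.limsup fun n : ℕ => E.h (E.orbitProd l a n) / ((n : ℝ≥0∞) + 1)

/-- `h(λ) = sup_{α ∈ C} h(λ, α)`. -/
noncomputable def EntropySpace.entropy (E : EntropySpace C) (l : C → C) : ℝ≥0∞ :=
  ⨆ a : C, E.relEntropy l a

/-!
Commutativity lets the factors of `α_0^n ∧ β_0^n` be regrouped into the pairs `λ^k α ∧ λ^k β`, each
of which precedes `λ^k (α ∧ β)`. Hence `α_0^n ∧ β_0^n ≺ (α ∧ β)_0^n`, and since `h` reverses `≺` and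
is subadditive, `h ((α ∧ β)_0^n) ≤ h (α_0^n) + h (β_0^n)`. Dividing by the number of factors and
using subadditivity of the limsup gives the claim.
-/

theorem ennreal_limsup_add_le {ι : Type*} (f : Filter ι) (u v : ι → ℝ≥0∞) :
    limsup (u + v) f ≤ limsup u f + limsup v f := by
  rw [limsup_eq (u := u), limsup_eq (u := v), sInf_eq_iInf, sInf_eq_iInf]
  refine ENNReal.le_iInf₂_add_iInf₂ fun a hu b hv => limsup_le_of_le (h := ?_)
  filter_upwards [hu, hv] with i hui hvi using add_le_add hui hvi

namespace EntropySpace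

variable (E : EntropySpace C)

instance : IsTrans C E.prec := ⟨E.prec_trans⟩

theorem meet_meet_meet_comm_prec {b c : C} (hbc : E.prec (E.meet b c) (E.meet c b)) (a d : C) :
    E.prec (E.meet (E.meet a b) (E.meet c d)) (E.meet (E.meet a c) (E.meet b d)) := by
  have inner : E.prec (E.meet (E.meet b c) d) (E.meet (E.meet c b) d) :=
    E.c2 _ _ _ _ hbc (E.prec_refl d)
  simpa only [E.meet_assoc] using E.c2 _ _ _ _ (E.prec_refl a) inner

variable {E} {l : C → C}

theorem meet_iterate_prec_iterate_meet
    (hmono : ∀ a b, E.prec a b → E.prec (l a) (l b))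
    (hmeet : ∀ a b, E.prec (E.meet (l a) (l b)) (l (E.meet a b))) (a b : C) (n : ℕ) :
    E.prec (E.meet (l^[n] a) (l^[n] b)) (l^[n] (E.meet a b)) := by
  induction n with
  | zero => exact E.prec_refl _
  | succ n ih =>
    simp only [Function.iterate_succ_apply']
    calc
      E.prec (E.meet (l (l^[n] a)) (l (l^[n] b))) (l (E.meet (l^[n] a) (l^[n] b))) := hmeet _ _
      E.prec _ (l (l^[n] (E.meet a b))) := hmono _ _ ih

theorem meet_orbitProd_prec_orbitProd_meet
    (hcomm : ∀ a b, E.prec (E.meet a b) (E.meet b a))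
    (hmono : ∀ a b, E.prec a b → E.prec (l a) (l b))
    (hmeet : ∀ a b, E.prec (E.meet (l a) (l b)) (l (E.meet a b))) (a b : C) (n : ℕ) :
    E.prec (E.meet (E.orbitProd l a n) (E.orbitProd l b n)) (E.orbitProd l (E.meet a b) n) := by
  induction n with
  | zero => exact E.prec_refl _
  | succ n ih =>
    calc
      E.prec (E.meet (E.orbitProd l a (n + 1)) (E.orbitProd l b (n + 1)))
          (E.meet (E.meet (E.orbitProd l a n) (E.orbitProd l b n))
            (E.meet (l^[n + 1] a) (l^[n + 1] b))) :=
        E.meet_meet_meet_comm_prec (hcomm _ _) _ _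
      E.prec _ (E.orbitProd l (E.meet a b) (n + 1)) :=
        E.c2 _ _ _ _ ih (meet_iterate_prec_iterate_meet hmono hmeet a b (n + 1))

theorem h_le_add_of_meet_prec {a b c : C} (habc : E.prec (E.meet a b) c) :
    E.h c ≤ E.h a + E.h b :=
  (E.h1 _ _ habc).trans (E.h2 a b)

theorem relEntropy_le_add_of_eventually_h_orbitProd_le {a b c : C}
    (hle : ∀ᶠ n in atTop,
      E.h (E.orbitProd l c n) ≤ E.h (E.orbitProd l a n) + E.h (E.orbitProd l b n)) :
    E.relEntropy l c ≤ E.relEntropy l a + E.relEntropy l b := by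
  refine le_trans (limsup_le_limsup (hle.mono fun n hn => ?_)) (ennreal_limsup_add_le atTop _ _)
  rw [Pi.add_apply, ← ENNReal.add_div]
  exact ENNReal.div_le_div_right hn _

end EntropySpace

theorem stmt_4_general (E : EntropySpace C)
    (hcomm : ∀ a b, E.prec (E.meet a b) (E.meet b a))
    (l : C → C)
    (hmono : ∀ a b, E.prec a b → E.prec (l a) (l b))
    (hmeet : ∀ a b, E.prec (E.meet (l a) (l b)) (l (E.meet a b)))
    (a b : C) :
    E.relEntropy l (E.meet a b) ≤ E.relEntropy l a + E.relEntropy l b :=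
  EntropySpace.relEntropy_le_add_of_eventually_h_orbitProd_le <| .of_forall fun n =>
    EntropySpace.h_le_add_of_meet_prec
      (EntropySpace.meet_orbitProd_prec_orbitProd_meet hcomm hmono hmeet a b n)

/-- If `C` is commutative and `λ` is a morphism, then `h(λ, α∧β) ≤ h(λ, α) + h(λ, β)`. -/
theorem stmt_4 (E : EntropySpace C)
    (hcomm : ∀ a b, E.prec (E.meet a b) (E.meet b a))
    (l : C → C)
    (hmono : ∀ a b, E.prec a b → E.prec (l a) (l b))
    (hm1 : ∀ a b, E.prec (l (E.meet a b)) (E.meet (l a) (l b)) ∧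
      E.prec (E.meet (l a) (l b)) (l (E.meet a b)))
    (a b : C) :
    E.relEntropy l (E.meet a b) ≤ E.relEntropy l a + E.relEntropy l b :=
  stmt_4_general E hcomm l hmono (fun a b => (hm1 a b).2) a b
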